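/- arXiv:2205.14343 — 13 statements merged into one kernel-verified Lean document; each statement's English description precedes it below -/
import Mathlib

section
/- Let M be a magma whose binary operation * satisfies the identities (x*y)*z = x*x and x*(y*z) = x*x for all x,y,z (the variety L₁). Then M satisfies x*x = y*y for all x,y (the identity D) if and only if M avoids the 2-element left zero band 2_LZ, i.e. there do not exist distinct elements a,b of M with a*a = a, a*b = a, b*a = b, b*b = b. -/
theorem stmt_0 {M : Type*} (f : M → M → M)
    (hL1a : ∀ x y z : M, f (f x y) z = f x x)
    (hL1b : ∀ x y z : M, f x (f y z) = f x x)
    :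
    (∀ x y : M, f x x = f y y) ↔
      (¬ ∃ a0 a1 : M, a0 ≠ a1 ∧ f a0 a0 = a0 ∧ f a0 a1 = a0 ∧ f a1 a0 = a1 ∧ f a1 a1 = a1) := by
  constructor
  · rintro h ⟨a, b, hne, ha, _, _, hb⟩
    exact hne (ha.symm.trans ((h a b).trans hb))
  · intro h x y
    by_contra hne
    exact h ⟨f x x, f y y, hne, hL1a x x _, hL1a x x _, hL1a y y _, hL1a y y _⟩
end

section
/- Let M be a magma whose binary operation * satisfies the identities (x*y)*z = x*z and x*(y*z) = x*z for all x,y,z (the variety L₇). Then M satisfies the rectangular band identities (x*y)*z = x*(y*z) and x*(y*x) = x for all x,y,z if and only if M avoids the 2-element null semigroup 2_N, i.e. there do not exist distinct elements a,b of M with a*a = a, a*b = a, b*a = a, b*b = a. -/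
theorem stmt_1 {M : Type*} (f : M → M → M)
    (hL7a : ∀ x y z : M, f (f x y) z = f x z)
    (hL7b : ∀ x y z : M, f x (f y z) = f x z)
    :
    ((∀ x y z : M, f (f x y) z = f x (f y z)) ∧ (∀ x y : M, f x (f y x) = x)) ↔
      (¬ ∃ a0 a1 : M, a0 ≠ a1 ∧ f a0 a0 = a0 ∧ f a0 a1 = a0 ∧ f a1 a0 = a0 ∧ f a1 a1 = a0) := by
  constructor
  · rintro ⟨_, h⟩ ⟨a, b, hne, _, _, _, h4⟩
    have := h b a
    rw [hL7b, h4] at this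
    exact hne this
  · intro h
    refine ⟨fun x y z => by rw [hL7a, hL7b], fun x y => ?_⟩
    rw [hL7b]
    by_contra hne
    exact h ⟨f x x, x, hne, by rw [hL7a, hL7b], by rw [hL7a], by rw [hL7b], rfl⟩
end

section
/- Let M be a magma whose binary operation * satisfies the identities x*y = x*z and (x*y)*z = x*y for all x,y,z (the variety U). Then M satisfies x*y = z*u for all x,y,z,u (the identity Z) if and only if M avoids the 2-element left zero band 2_LZ, i.e. there do not exist distinct elements a,b of M with a*a = a, a*b = a, b*a = b, b*b = b. -/
theorem stmt_2 {M : Type*} (f : M → M → M)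
    (hUa : ∀ x y z : M, f x y = f x z)
    (hUb : ∀ x y z : M, f (f x y) z = f x y)
    :
    (∀ x y z u : M, f x y = f z u) ↔
      (¬ ∃ a0 a1 : M, a0 ≠ a1 ∧ f a0 a0 = a0 ∧ f a0 a1 = a0 ∧ f a1 a0 = a1 ∧ f a1 a1 = a1) := by
  constructor
  · rintro h ⟨a, b, hne, haa, -, -, hbb⟩
    exact hne (haa.symm.trans ((h a a b b).trans hbb))
  · intro h x y z u
    by_contra hne
    exact h ⟨f x y, f z u, hne, hUb _ _ _, hUb _ _ _, hUb _ _ _, hUb _ _ _⟩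
end

section
/- Let M be a magma whose binary operation * satisfies the identities (x*y)*z = x*x, x*(y*z) = x*x (the variety L₁) and x*y = y*x (commutativity C) for all x,y,z. Then M satisfies x*y = z*u for all x,y,z,u (the identity Z) if and only if M avoids the 4-element magma Q whose Cayley table on {0,1,2,3} is: 1*2 = 2*1 = 3, and all other products equal 0. -/
theorem stmt_3 {M : Type*} (f : M → M → M)
    (hL1a : ∀ x y z : M, f (f x y) z = f x x)
    (hL1b : ∀ x y z : M, f x (f y z) = f x x)
    (hC : ∀ x y : M, f x y = f y x)
    :
    (∀ x y z u : M, f x y = f z u) ↔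
      (¬ ∃ a0 a1 a2 a3 : M, a0 ≠ a1 ∧ a0 ≠ a2 ∧ a0 ≠ a3 ∧ a1 ≠ a2 ∧ a1 ≠ a3 ∧ a2 ≠ a3 ∧ f a0 a0 = a0 ∧ f a0 a1 = a0 ∧ f a0 a2 = a0 ∧ f a0 a3 = a0 ∧ f a1 a0 = a0 ∧ f a1 a1 = a0 ∧ f a1 a2 = a3 ∧ f a1 a3 = a0 ∧ f a2 a0 = a0 ∧ f a2 a1 = a3 ∧ f a2 a2 = a0 ∧ f a2 a3 = a0 ∧ f a3 a0 = a0 ∧ f a3 a1 = a0 ∧ f a3 a2 = a0 ∧ f a3 a3 = a0) := by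
  have sq : ∀ x y : M, f x x = f y y := by
    intro x y
    rw [← hL1a x y x, hC x y, hL1a y x x]
  constructor
  · rintro h ⟨a0, a1, a2, a3, -, -, h03, -, -, -, h00, -, -, -, -, -, h12, -⟩
    exact h03 (h00.symm.trans ((h a0 a0 a1 a2).trans h12))
  · intro h
    have key : ∀ x y : M, f x y = f x x := by
      intro x y
      by_contra hne
      have hne' : f y x ≠ f x x := by rwa [hC y x]
      have hp : ∀ u v w : M, f (f u v) w = f x x := fun u v w => (hL1a u v w).trans (sq u x)
      have hq : ∀ u v w : M, f u (f v w) = f x x := fun u v w => (hL1b u v w).trans (sq u x)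
      refine h ⟨f x x, x, y, f x y, ?_, ?_, Ne.symm hne, ?_, ?_, ?_, hp _ _ _, hp _ _ _, hp _ _ _,
        hp _ _ _, hq _ _ _, rfl, rfl, hq _ _ _, hq _ _ _, hC y x, sq y x, hq _ _ _, hp _ _ _,
        hp _ _ _, hp _ _ _, hp _ _ _⟩
      · intro e
        have := hp x x y
        rw [e] at this
        exact hne (this.trans e.symm |>.trans (by rw [e]))
      · intro e
        have := hq x x x
        rw [e] at this
        exact hne (this.trans e.symm |>.trans (by rw [e]))
      · intro e
        exact hne (by rw [← e])
      · intro e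
        have := hp x y y
        rw [← e] at this
        exact hne this
      · intro e
        have := hq x x y
        rw [← e] at this
        exact hne this
    intro x y z u
    rw [key x y, key z u, sq x z]
end

section
/- Let M be a magma whose binary operation * satisfies the identities x*y = x*z and (x*y)*z = x for all x,y,z (the variety Ũ). Then M satisfies x*y = x for all x,y (the left zero identity LZ) if and only if M avoids the 2-element magma N whose Cayley table on {0,1} is: 0*0 = 1, 0*1 = 1, 1*0 = 0, 1*1 = 0. -/
theorem stmt_4 {M : Type*} (f : M → M → M)
    (hUta : ∀ x y z : M, f x y = f x z)
    (hUtb : ∀ x y z : M, f (f x y) z = x)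
    :
    (∀ x y : M, f x y = x) ↔
      (¬ ∃ a0 a1 : M, a0 ≠ a1 ∧ f a0 a0 = a1 ∧ f a0 a1 = a1 ∧ f a1 a0 = a0 ∧ f a1 a1 = a0) := by
  constructor
  · rintro h ⟨a0, a1, hne, h1, -⟩
    exact hne ((h a0 a0).symm.trans h1)
  · intro h x y
    by_contra hne
    exact h ⟨x, f x y, fun e => hne e.symm, hUta _ _ _, hUta _ _ _, hUtb _ _ _, hUtb _ _ _⟩
end

section
/- Let M be a magma whose binary operation * satisfies the rectangular band identities (x*y)*z = x*(y*z) and x*(y*x) = x for all x,y,z (the variety RB). Then M satisfies x*y = x for all x,y (the left zero identity LZ) if and only if M avoids the 2-element right zero band 2_RZ, i.e. there do not exist distinct elements a,b of M with a*a = a, a*b = b, b*a = a, b*b = b. -/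
theorem stmt_5 {M : Type*} (f : M → M → M)
    (hRBa : ∀ x y z : M, f (f x y) z = f x (f y z))
    (hRBb : ∀ x y : M, f x (f y x) = x)
    :
    (∀ x y : M, f x y = x) ↔
      (¬ ∃ a0 a1 : M, a0 ≠ a1 ∧ f a0 a0 = a0 ∧ f a0 a1 = a1 ∧ f a1 a0 = a0 ∧ f a1 a1 = a1) := by
  have idem : ∀ x, f x x = x := by
    intro x
    have h := hRBb x (f x x)
    rwa [hRBa, hRBb] at h
  constructor
  · rintro h ⟨a, b, hne, -, hab, -, -⟩
    exact hne ((h a b).symm.trans hab)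
  · intro h x y
    by_contra hne
    refine h ⟨x, f x y, fun e => hne e.symm, idem x, ?_, ?_, idem _⟩
    · rw [← hRBa, idem]
    · rw [hRBa, hRBb]
end

section
/- Let M be a magma whose binary operation * satisfies the identities x*y = x*z and (x*y)*z = x*y for all x,y,z (the variety U). Then M satisfies x*y = x for all x,y (the left zero identity LZ) if and only if M avoids the 2-element null semigroup 2_N, i.e. there do not exist distinct elements a,b of M with a*a = a, a*b = a, b*a = a, b*b = a. -/
theorem stmt_6 {M : Type*} (f : M → M → M)
    (hUa : ∀ x y z : M, f x y = f x z)
    (hUb : ∀ x y z : M, f (f x y) z = f x y)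
    :
    (∀ x y : M, f x y = x) ↔
      (¬ ∃ a0 a1 : M, a0 ≠ a1 ∧ f a0 a0 = a0 ∧ f a0 a1 = a0 ∧ f a1 a0 = a0 ∧ f a1 a1 = a0) := by
  constructor
  · rintro h ⟨a, b, hne, -, -, -, h4⟩
    exact hne (h4.symm.trans (h b b))
  · intro h x y
    by_contra hne
    exact h ⟨f x y, x, hne, hUb _ _ _, hUb _ _ _, hUa _ _ _, hUa _ _ _⟩
end

section
/- Let M be a magma whose binary operation * satisfies the identities (x*y)*z = x*x, x*(y*z) = x*x (the variety L₁) and x*x = y*y (the identity D) for all x,y,z. Then M satisfies x*y = y*x for all x,y (commutativity C) if and only if M avoids both the 4-element magma F with Cayley table on {0,1,2,3} given by 1*2 = 3 and all other products equal to 0, and the 5-element magma G with Cayley table on {0,1,2,3,4} given by 1*2 = 3, 2*1 = 4, and all other products equal to 0. -/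
theorem stmt_9 {M : Type*} (f : M → M → M)
    (hL1a : ∀ x y z : M, f (f x y) z = f x x)
    (hL1b : ∀ x y z : M, f x (f y z) = f x x)
    (hD : ∀ x y : M, f x x = f y y)
    :
    (∀ x y : M, f x y = f y x) ↔
      (¬ ∃ a0 a1 a2 a3 : M, a0 ≠ a1 ∧ a0 ≠ a2 ∧ a0 ≠ a3 ∧ a1 ≠ a2 ∧ a1 ≠ a3 ∧ a2 ≠ a3 ∧ f a0 a0 = a0 ∧ f a0 a1 = a0 ∧ f a0 a2 = a0 ∧ f a0 a3 = a0 ∧ f a1 a0 = a0 ∧ f a1 a1 = a0 ∧ f a1 a2 = a3 ∧ f a1 a3 = a0 ∧ f a2 a0 = a0 ∧ f a2 a1 = a0 ∧ f a2 a2 = a0 ∧ f a2 a3 = a0 ∧ f a3 a0 = a0 ∧ f a3 a1 = a0 ∧ f a3 a2 = a0 ∧ f a3 a3 = a0) ∧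
      (¬ ∃ a0 a1 a2 a3 a4 : M, a0 ≠ a1 ∧ a0 ≠ a2 ∧ a0 ≠ a3 ∧ a0 ≠ a4 ∧ a1 ≠ a2 ∧ a1 ≠ a3 ∧ a1 ≠ a4 ∧ a2 ≠ a3 ∧ a2 ≠ a4 ∧ a3 ≠ a4 ∧ f a0 a0 = a0 ∧ f a0 a1 = a0 ∧ f a0 a2 = a0 ∧ f a0 a3 = a0 ∧ f a0 a4 = a0 ∧ f a1 a0 = a0 ∧ f a1 a1 = a0 ∧ f a1 a2 = a3 ∧ f a1 a3 = a0 ∧ f a1 a4 = a0 ∧ f a2 a0 = a0 ∧ f a2 a1 = a4 ∧ f a2 a2 = a0 ∧ f a2 a3 = a0 ∧ f a2 a4 = a0 ∧ f a3 a0 = a0 ∧ f a3 a1 = a0 ∧ f a3 a2 = a0 ∧ f a3 a3 = a0 ∧ f a3 a4 = a0 ∧ f a4 a0 = a0 ∧ f a4 a1 = a0 ∧ f a4 a2 = a0 ∧ f a4 a3 = a0 ∧ f a4 a4 = a0) := by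
  constructor
  · intro hC
    refine ⟨?_, ?_⟩
    · rintro ⟨a0, a1, a2, a3, h⟩
      have := hC a1 a2
      grind
    · rintro ⟨a0, a1, a2, a3, a4, h⟩
      have := hC a1 a2
      grind
  · rintro ⟨hF, hG⟩
    by_contra hne
    push Not at hne
    obtain ⟨x, y, hxy⟩ := hne
    obtain ⟨e, he⟩ : ∃ e, e = f x x := ⟨_, rfl⟩
    have hs : ∀ z, f z z = e := fun z => by rw [he]; exact hD z x
    have hl : ∀ u v z, f (f u v) z = e := fun u v z => by rw [hL1a, hs]
    have hr : ∀ u v z, f z (f u v) = e := fun u v z => by rw [hL1b, hs]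
    have hel : ∀ z, f e z = e := fun z => by
      have := hl x x z
      rwa [← he] at this
    have her : ∀ z, f z e = e := fun z => by
      have := hr x x z
      rwa [← he] at this
    have key : ∀ x y, f x y ≠ f y x → ∀ u v, f u v ≠ x ∧ f u v ≠ y := by
      intro x y hxy u v
      constructor
      · rintro rfl
        exact hxy (by rw [hl, hr])
      · rintro rfl
        exact hxy (by rw [hl, hr])
    have hne' : ∀ x y, f x y ≠ f y x → e ≠ x ∧ e ≠ y ∧ x ≠ y := by
      intro x y hxy
      refine ⟨?_, ?_, ?_⟩
      · rw [← hs x]; exact (key x y hxy x x).1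
      · rw [← hs x]; exact (key x y hxy x x).2
      · rintro rfl
        exact hxy rfl
    have main : ∀ x y, f x y ≠ f y x → f y x ≠ e := by
      intro x y hxy h0
      obtain ⟨h1, h2, h3⟩ := hne' x y hxy
      have k := key x y hxy x y
      exact hF ⟨e, x, y, f x y, h1, h2, fun h => hxy (by rw [h0, ← h]), h3, k.1.symm, k.2.symm,
        by simp only [hs, hl, hr, hel, her, h0, and_self]⟩
    have m1 := main x y hxy
    have m2 := main y x hxy.symm
    obtain ⟨h1, h2, h3⟩ := hne' x y hxy
    have k := key x y hxy x y
    have k' := key x y hxy y x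
    exact hG ⟨e, x, y, f x y, f y x, h1, h2, m2.symm, m1.symm, h3, k.1.symm, k'.1.symm,
      k.2.symm, k'.2.symm, hxy, by simp only [hs, hl, hr, hel, her, and_self]⟩
end

section
/- Let M be a magma whose binary operation * satisfies the identities (x*y)*z = x*x and x*(y*z) = x*y for all x,y,z (the variety L₂). Then M satisfies the identities x*y = x*z and (x*y)*z = x*y for all x,y,z (the variety U) if and only if M avoids the 4-element magma E with Cayley table on {0,1,2,3} (rows indexed by left factor): row 0 = (2,3,2,2), row 1 = (1,1,1,1), row 2 = (2,2,2,2), row 3 = (2,2,2,2). -/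
theorem stmt_11 {M : Type*} (f : M → M → M)
    (hL2a : ∀ x y z : M, f (f x y) z = f x x)
    (hL2b : ∀ x y z : M, f x (f y z) = f x y)
    :
    ((∀ x y z : M, f x y = f x z) ∧ (∀ x y z : M, f (f x y) z = f x y)) ↔
      (¬ ∃ a0 a1 a2 a3 : M, a0 ≠ a1 ∧ a0 ≠ a2 ∧ a0 ≠ a3 ∧ a1 ≠ a2 ∧ a1 ≠ a3 ∧ a2 ≠ a3 ∧ f a0 a0 = a2 ∧ f a0 a1 = a3 ∧ f a0 a2 = a2 ∧ f a0 a3 = a2 ∧ f a1 a0 = a1 ∧ f a1 a1 = a1 ∧ f a1 a2 = a1 ∧ f a1 a3 = a1 ∧ f a2 a0 = a2 ∧ f a2 a1 = a2 ∧ f a2 a2 = a2 ∧ f a2 a3 = a2 ∧ f a3 a0 = a2 ∧ f a3 a1 = a2 ∧ f a3 a2 = a2 ∧ f a3 a3 = a2) := by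
  constructor
  · rintro ⟨h1, -⟩ ⟨a0, a1, a2, a3, -, -, -, -, -, h23, h00, h01, -⟩
    exact h23 (by rw [← h00, ← h01]; exact h1 _ _ _)
  · intro h
    have key : ∀ x y : M, f x y = f x x := by
      intro x y
      by_contra hne
      apply h
      have e1 : f x (f y y) = f x y := hL2b x y y
      have e2 : f x (f x x) = f x x := hL2b x x x
      have e3 : f x (f x y) = f x x := hL2b x x y
      refine ⟨x, f y y, f x x, f x y, ?_, ?_, ?_, ?_, ?_, ?_, rfl, e1, e2, e3,
        hL2a _ _ _, hL2a _ _ _, hL2a _ _ _, hL2a _ _ _, hL2a _ _ _, hL2a _ _ _,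
        hL2a _ _ _, hL2a _ _ _, hL2a _ _ _, hL2a _ _ _, hL2a _ _ _, hL2a _ _ _⟩
      · intro e
        rw [← e] at e1
        exact hne e1.symm
      · intro e
        have := hL2a x x y
        rw [← e] at this
        exact hne (this.trans e)
      · intro e
        have := hL2a x y y
        rw [← e] at this
        exact hne this
      · intro e
        rw [e, e2] at e1
        exact hne e1.symm
      · intro e
        rw [e, e3] at e1
        exact hne e1.symm
      · exact fun e => hne e.symm
    exact ⟨fun x y z => (key x y).trans (key x z).symm,
      fun x y z => (hL2a x y z).trans (key x y).symm⟩
end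

section
/- Let M be a magma whose binary operation * satisfies the identities (x*y)*z = x*z and x*(y*z) = x*x for all x,y,z (the variety L₄). Then M satisfies the identities x*y = x*z and (x*y)*z = x*y for all x,y,z (the variety U) if and only if M avoids the 4-element magma D with Cayley table on {0,1,2,3} (rows indexed by left factor): row 0 = (0,2,0,0), row 1 = (3,3,3,3), row 2 = (0,2,0,0), row 3 = (3,3,3,3). -/
theorem stmt_13 {M : Type*} (f : M → M → M)
    (hL4a : ∀ x y z : M, f (f x y) z = f x z)
    (hL4b : ∀ x y z : M, f x (f y z) = f x x)
    :
    ((∀ x y z : M, f x y = f x z) ∧ (∀ x y z : M, f (f x y) z = f x y)) ↔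
      (¬ ∃ a0 a1 a2 a3 : M, a0 ≠ a1 ∧ a0 ≠ a2 ∧ a0 ≠ a3 ∧ a1 ≠ a2 ∧ a1 ≠ a3 ∧ a2 ≠ a3 ∧ f a0 a0 = a0 ∧ f a0 a1 = a2 ∧ f a0 a2 = a0 ∧ f a0 a3 = a0 ∧ f a1 a0 = a3 ∧ f a1 a1 = a3 ∧ f a1 a2 = a3 ∧ f a1 a3 = a3 ∧ f a2 a0 = a0 ∧ f a2 a1 = a2 ∧ f a2 a2 = a0 ∧ f a2 a3 = a0 ∧ f a3 a0 = a3 ∧ f a3 a1 = a3 ∧ f a3 a2 = a3 ∧ f a3 a3 = a3) := by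
  constructor
  · rintro ⟨h, -⟩ ⟨a0, a1, a2, a3, -, h02, -, -, -, -, h00, h01, -⟩
    exact h02 (h00.symm.trans ((h a0 a0 a1).trans h01))
  · intro hD
    have key : ∀ x y : M, f x y = f x x := by
      intro x y
      by_contra hne
      -- `y` is not a product
      have hy : ∀ u v : M, f u v ≠ y := by
        intro u v e
        exact hne (by rw [← e, hL4b])
      refine hD ⟨f x x, y, f x y, f y y, hy _ _, fun e => hne e.symm, ?_,
        (hy _ _).symm, (hy _ _).symm, ?_, ?_⟩
      · intro e
        have h1 : f (f x x) y = f (f y y) y := by rw [e]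
        rw [hL4a, hL4a] at h1
        exact hne (h1.trans e.symm)
      · intro e
        have h3 : f (f x y) (f x x) = f (f y y) (f x x) := by rw [e]
        rw [hL4a, hL4a, hL4b, hL4b] at h3
        exact hne (e.trans h3.symm)
      · simp only [hL4a, hL4b, and_self]
    exact ⟨fun x y z => by rw [key x y, key x z],
      fun x y z => by rw [hL4a, key x y, key x z]⟩
end

section
/- Let M be a magma whose binary operation * satisfies the identities (x*y)*z = x*y and x*(y*z) = x*y for all x,y,z (the variety L₅). Then M satisfies the identities x*y = x*z and (x*y)*z = x*y for all x,y,z (the variety U) if and only if M avoids the 4-element magma P with Cayley table on {0,1,2,3} (rows indexed by left factor): row 0 = (2,3,2,2), row 1 = (1,1,1,1), row 2 = (2,2,2,2), row 3 = (3,3,3,3). -/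
theorem stmt_14 {M : Type*} (f : M → M → M)
    (hL5a : ∀ x y z : M, f (f x y) z = f x y)
    (hL5b : ∀ x y z : M, f x (f y z) = f x y)
    :
    ((∀ x y z : M, f x y = f x z) ∧ (∀ x y z : M, f (f x y) z = f x y)) ↔
      (¬ ∃ a0 a1 a2 a3 : M, a0 ≠ a1 ∧ a0 ≠ a2 ∧ a0 ≠ a3 ∧ a1 ≠ a2 ∧ a1 ≠ a3 ∧ a2 ≠ a3 ∧ f a0 a0 = a2 ∧ f a0 a1 = a3 ∧ f a0 a2 = a2 ∧ f a0 a3 = a2 ∧ f a1 a0 = a1 ∧ f a1 a1 = a1 ∧ f a1 a2 = a1 ∧ f a1 a3 = a1 ∧ f a2 a0 = a2 ∧ f a2 a1 = a2 ∧ f a2 a2 = a2 ∧ f a2 a3 = a2 ∧ f a3 a0 = a3 ∧ f a3 a1 = a3 ∧ f a3 a2 = a3 ∧ f a3 a3 = a3) := by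
  constructor
  · rintro ⟨h, -⟩ ⟨a0, a1, a2, a3, -, -, -, -, -, h23, h00, h01, -⟩
    exact h23 (h00.symm.trans ((h a0 a0 a1).trans h01))
  · intro hP
    have key : ∀ a b : M, f a b = f a a := by
      intro a b
      by_contra hne
      apply hP
      refine ⟨a, f b b, f a a, f a b, ?_, ?_, ?_, ?_, ?_, fun h => hne h.symm, ?_⟩
      · intro h
        have h1 := hL5a b b b
        have h2 := hL5a b b a
        have h3 := hL5a b b (f b b)
        have h4 := hL5b a b b
        rw [← h] at h1 h2
        exact hne (h1.trans h2.symm)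
      · intro h
        have h1 := hL5a a a b
        rw [← h] at h1
        exact hne (h1.trans h)
      · intro h
        have h1 := hL5a a b a
        rw [← h] at h1
        exact hne (h.symm.trans h1.symm)
      · intro h
        have h1 := hL5b a b b
        rw [h, hL5b] at h1
        exact hne h1.symm
      · intro h
        have h1 := hL5b a b b
        rw [h, hL5b] at h1
        exact hne h1.symm
      · simp only [hL5a, hL5b, and_self]
    exact ⟨fun x y z => (key x y).trans (key x z).symm, hL5a⟩
end

section
/- Let M be a magma whose binary operation * satisfies the identities (x*y)*z = x*z and x*(y*z) = x*y for all x,y,z (the variety L₆). Then M satisfies the identities x*y = x*z and (x*y)*z = x*y for all x,y,z (the variety U) if and only if M avoids both the 3-element magma M₁ with Cayley table on {0,1,2} (rows indexed by left factor) row 0 = (0,2,0), row 1 = (1,1,1), row 2 = (0,2,0), and the 4-element magma M₂ with Cayley table on {0,1,2,3} given by row 0 = (0,2,0,2), row 1 = (1,3,1,3), row 2 = (0,2,0,2), row 3 = (1,3,1,3). -/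
theorem stmt_15 {M : Type*} (f : M → M → M)
    (hL6a : ∀ x y z : M, f (f x y) z = f x z)
    (hL6b : ∀ x y z : M, f x (f y z) = f x y)
    :
    ((∀ x y z : M, f x y = f x z) ∧ (∀ x y z : M, f (f x y) z = f x y)) ↔
      (¬ ∃ a0 a1 a2 : M, a0 ≠ a1 ∧ a0 ≠ a2 ∧ a1 ≠ a2 ∧ f a0 a0 = a0 ∧ f a0 a1 = a2 ∧ f a0 a2 = a0 ∧ f a1 a0 = a1 ∧ f a1 a1 = a1 ∧ f a1 a2 = a1 ∧ f a2 a0 = a0 ∧ f a2 a1 = a2 ∧ f a2 a2 = a0) ∧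
      (¬ ∃ a0 a1 a2 a3 : M, a0 ≠ a1 ∧ a0 ≠ a2 ∧ a0 ≠ a3 ∧ a1 ≠ a2 ∧ a1 ≠ a3 ∧ a2 ≠ a3 ∧ f a0 a0 = a0 ∧ f a0 a1 = a2 ∧ f a0 a2 = a0 ∧ f a0 a3 = a2 ∧ f a1 a0 = a1 ∧ f a1 a1 = a3 ∧ f a1 a2 = a1 ∧ f a1 a3 = a3 ∧ f a2 a0 = a0 ∧ f a2 a1 = a2 ∧ f a2 a2 = a0 ∧ f a2 a3 = a2 ∧ f a3 a0 = a1 ∧ f a3 a1 = a3 ∧ f a3 a2 = a1 ∧ f a3 a3 = a3) := by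
  constructor
  · rintro ⟨h, -⟩
    refine ⟨?_, ?_⟩
    · rintro ⟨a0, a1, a2, -, h02, -, h00, h01, -⟩
      exact h02 (h00.symm.trans ((h a0 a0 a1).trans h01))
    · rintro ⟨a0, a1, a2, a3, -, h02, -, -, -, -, h00, h01, -⟩
      exact h02 (h00.symm.trans ((h a0 a0 a1).trans h01))
  · rintro ⟨h1, h2⟩
    have key : ∀ x w : M, f x x = f x w := by
      intro x w
      by_contra hne
      -- elements of the class of `x` differ from elements of the class of `w`
      have sep : ∀ u v : M, f x u ≠ f w v := by
        intro u v he
        apply hne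
        have := congrArg (f x) he
        rwa [hL6b, hL6b] at this
      by_cases hw : f w x = f w w
      · exact h1 ⟨f x x, f w w, f x w, sep _ _, hne, (sep _ _).symm, by
          simp only [hL6a, hL6b, hw, and_self]⟩
      · exact h2 ⟨f x x, f w x, f x w, f w w, sep _ _, hne, sep _ _, (sep _ _).symm, hw,
          sep _ _, by simp only [hL6a, hL6b, and_self]⟩
    have h : ∀ x y z : M, f x y = f x z := fun x y z => (key x y).symm.trans (key x z)
    exact ⟨h, fun x y z => by rw [hL6a]; exact h _ _ _⟩
end

section
/- Let M be a magma whose binary operation * satisfies the identities (x*y)*z = x*z and x*(y*z) = x*z for all x,y,z (the variety L₇). Then M satisfies the identities x*y = x*z and (x*y)*z = x*y for all x,y,z (the variety U) if and only if M avoids the 2-element right zero band 2_RZ, i.e. there do not exist distinct elements a,b of M with a*a = a, a*b = b, b*a = a, b*b = b. -/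
theorem stmt_16 {M : Type*} (f : M → M → M)
    (hL7a : ∀ x y z : M, f (f x y) z = f x z)
    (hL7b : ∀ x y z : M, f x (f y z) = f x z)
    :
    ((∀ x y z : M, f x y = f x z) ∧ (∀ x y z : M, f (f x y) z = f x y)) ↔
      (¬ ∃ a0 a1 : M, a0 ≠ a1 ∧ f a0 a0 = a0 ∧ f a0 a1 = a1 ∧ f a1 a0 = a0 ∧ f a1 a1 = a1) := by
  constructor
  · rintro ⟨h, -⟩ ⟨a, b, hne, haa, hab, -, -⟩
    exact hne (haa.symm.trans ((h a a b).trans hab))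
  · intro h
    have key : ∀ x y z : M, f x y = f x z := by
      intro x y z
      by_contra hne
      exact h ⟨f x y, f x z, hne, by rw [hL7a, hL7b], by rw [hL7a, hL7b],
        by rw [hL7a, hL7b], by rw [hL7a, hL7b]⟩
    exact ⟨key, fun x y z => (hL7a x y z).trans (key x z y)⟩
end
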